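/- arXiv:1803.06339 — 9 statements merged into one kernel-verified Lean document; each statement's English description precedes it below -/
import Mathlib

section
/- (Abstract form of Theorem 3.8, well-posedness for a possibly nonsymmetric form.) For every F ∈ X' there exists a unique u ∈ V such that b(u, v) = F(v) for all v ∈ X, and this solution satisfies the a priori estimate ‖u‖_V ≤ c_s⁻¹ ‖F‖_{X'}, where c_s = √2·γ / (2·(1 + Γ²)). -/
open scoped InnerProductSpace

/-- Abstract form of Theorem 3.8: well-posedness of `b(u,v) = F(v)` for a possibly
nonsymmetric bilinear form, with the a priori estimate `‖u‖_V ≤ c_s⁻¹ ‖F‖_{X'}`,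
`c_s = √2·γ / (2·(1 + Γ²))`. -/
theorem wellposedness_nonsymmetric
    {X : Type*} [NormedAddCommGroup X] [InnerProductSpace ℝ X] [CompleteSpace X]
    {V : Type*} [NormedAddCommGroup V] [NormedSpace ℝ V] [CompleteSpace V]
    (ι : V →ₗ[ℝ] X) (hι : Function.Injective ι)
    (D : V →ₗ[ℝ] (X →L[ℝ] ℝ))
    (hnormV : ∀ u : V, ‖u‖ = Real.sqrt (‖ι u‖ ^ 2 + ‖D u‖ ^ 2))
    (γ Γ : ℝ) (hγ : 0 < γ) (hγΓ : γ ≤ Γ)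
    (A : X →ₗ[ℝ] X →ₗ[ℝ] ℝ)
    (hAbdd : ∀ x y : X, |A x y| ≤ Γ * ‖x‖ * ‖y‖)
    (hAell : ∀ x : X, γ * ‖x‖ ^ 2 ≤ A x x)
    (hDpos : ∀ u : V, 0 ≤ D u (ι u))
    (haux : ∀ x : X, ∃ z : V,
      ∀ w : X, D z w + Γ * ⟪ι z, w⟫_ℝ = Γ * ⟪x, w⟫_ℝ) :
    ∀ F : X →L[ℝ] ℝ, ∃ u : V,
      (∀ v : X, D u v + A (ι u) v = F v) ∧
      ‖u‖ ≤ (Real.sqrt 2 * γ / (2 * (1 + Γ ^ 2)))⁻¹ * ‖F‖ ∧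
      (∀ u' : V, (∀ v : X, D u' v + A (ι u') v = F v) → u' = u) := by
  have hΓ : 0 < Γ := lt_of_lt_of_le hγ hγΓ
  have hιle : ∀ u : V, ‖ι u‖ ≤ 1 * ‖u‖ := fun u => by
    rw [hnormV u, one_mul]
    exact Real.le_sqrt_of_sq_le (by nlinarith [sq_nonneg ‖D u‖])
  have hDle : ∀ u : V, ‖D u‖ ≤ 1 * ‖u‖ := fun u => by
    rw [hnormV u, one_mul]
    exact Real.le_sqrt_of_sq_le (by nlinarith [sq_nonneg ‖ι u‖])
  let Ac : X →L[ℝ] X →L[ℝ] ℝ := A.mkContinuous₂ Γ (fun x y => by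
    rw [Real.norm_eq_abs]; exact hAbdd x y)
  have hAc : ∀ x y, Ac x y = A x y := fun x y => rfl
  have hAcn : ∀ x, ‖Ac x‖ ≤ Γ * ‖x‖ := fun x =>
    ContinuousLinearMap.opNorm_le_bound _ (by positivity) (fun y => by
      rw [hAc, Real.norm_eq_abs]; exact hAbdd x y)
  let T : V →L[ℝ] (X →L[ℝ] ℝ) := D.mkContinuous 1 hDle + Ac.comp (ι.mkContinuous 1 hιle)
  have hT : ∀ u v, T u v = D u v + A (ι u) v := fun u v => rfl
  have hT' : ∀ u, T u = D u + Ac (ι u) := fun u => rfl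
  set C : ℝ := (Real.sqrt 2 * γ / (2 * (1 + Γ ^ 2)))⁻¹ with hC
  have hCpos : 0 < C := by rw [hC]; positivity
  have h2 : Real.sqrt 2 ^ 2 = 2 := Real.sq_sqrt (by norm_num)
  have hC2 : C ^ 2 * γ ^ 2 = 2 * (1 + Γ ^ 2) ^ 2 := by
    have h20 : Real.sqrt 2 ≠ 0 := by positivity
    rw [hC, inv_div, div_pow, mul_pow, mul_pow, h2]
    field_simp
  have hest : ∀ u, ‖u‖ ≤ C * ‖T u‖ := fun u => by
    have h1 : γ * ‖ι u‖ ≤ ‖T u‖ := by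
      rcases (norm_nonneg (ι u)).eq_or_lt with h0 | h0
      · rw [← h0, mul_zero]; exact norm_nonneg _
      · have ha := (le_abs_self _).trans ((T u).le_opNorm (ι u))
        rw [hT] at ha
        have hb := hAell (ι u)
        have hc := hDpos u
        refine le_of_mul_le_mul_right ?_ h0
        nlinarith
    have h3 : ‖D u‖ ≤ ‖T u‖ + Γ * ‖ι u‖ := by
      have : D u = T u - Ac (ι u) := by rw [hT']; abel
      rw [this]
      exact (norm_sub_le _ _).trans (by linarith [hAcn (ι u)])
    have h4 : γ * ‖D u‖ ≤ 2 * Γ * ‖T u‖ := by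
      have hn := norm_nonneg (T u)
      nlinarith [mul_le_mul_of_nonneg_left h3 hγ.le, mul_le_mul_of_nonneg_left h1 hΓ.le,
        mul_le_mul_of_nonneg_right hγΓ hn]
    rw [hnormV u]
    refine Real.sqrt_le_iff.mpr ⟨by positivity, ?_⟩
    have h5 : (γ * ‖ι u‖) ^ 2 ≤ ‖T u‖ ^ 2 := pow_le_pow_left₀ (by positivity) h1 2
    have h6 : (γ * ‖D u‖) ^ 2 ≤ (2 * Γ * ‖T u‖) ^ 2 := pow_le_pow_left₀ (by positivity) h4 2
    have hγ2 : 0 < γ ^ 2 := by positivity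
    refine le_of_mul_le_mul_left ?_ hγ2
    calc γ ^ 2 * (‖ι u‖ ^ 2 + ‖D u‖ ^ 2) = (γ * ‖ι u‖) ^ 2 + (γ * ‖D u‖) ^ 2 := by ring
      _ ≤ ‖T u‖ ^ 2 + (2 * Γ * ‖T u‖) ^ 2 := add_le_add h5 h6
      _ ≤ (2 * (1 + Γ ^ 2) ^ 2) * ‖T u‖ ^ 2 := by
        have : 0 ≤ (1 + 2 * Γ ^ 4) * ‖T u‖ ^ 2 := by positivity
        nlinarith
      _ = γ ^ 2 * (C * ‖T u‖) ^ 2 := by rw [← hC2]; ring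
  -- injectivity / uniqueness
  have huniq : ∀ u u', T u' = T u → u' = u := fun u u' h => by
    have := hest (u' - u)
    rw [map_sub, h, sub_self, norm_zero, mul_zero] at this
    exact sub_eq_zero.mp (norm_le_zero_iff.mp this)
  -- transport to `X` by Riesz
  let R := InnerProductSpace.toDual ℝ X
  let S : V →ₗ[ℝ] X :=
    { toFun := fun u => R.symm (T u)
      map_add' := fun u v => by simp
      map_smul' := fun c v => by simp }
  have hS : ∀ u, S u = R.symm (T u) := fun u => rfl
  have hSin : ∀ u v, ⟪S u, v⟫_ℝ = D u v + A (ι u) v := fun u v => by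
    rw [hS, ← hT]; exact InnerProductSpace.toDual_symm_apply
  have hclosed : IsClosed (LinearMap.range S : Set X) := by
    have hanti : AntilipschitzWith C.toNNReal S :=
      AddMonoidHomClass.antilipschitz_of_bound S (fun u => by
        rw [Real.coe_toNNReal _ hCpos.le, hS, LinearIsometryEquiv.norm_map]
        exact hest u)
    have huc : UniformContinuous S :=
      R.symm.isometry.uniformContinuous.comp T.uniformContinuous
    have := hanti.isClosed_range huc
    rw [LinearMap.coe_range]
    exact this
  have horth : (LinearMap.range S)ᗮ = ⊥ := by
    rw [Submodule.eq_bot_iff]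
    intro x hx
    have hx' : ∀ u, D u x + A (ι u) x = 0 := fun u => by
      rw [← hSin]
      exact (Submodule.mem_orthogonal _ _).mp hx _ ⟨u, rfl⟩
    let a : X := Γ⁻¹ • R.symm (Ac.flip x)
    have ha : ∀ v, Γ * ⟪a, v⟫_ℝ = A v x := fun v => by
      have h1 : ⟪R.symm (Ac.flip x), v⟫_ℝ = A v x := InnerProductSpace.toDual_symm_apply
      simp only [a, real_inner_smul_left, h1]
      field_simp
    obtain ⟨z, hz⟩ := haux (x + a)
    have e1 := hz x
    have e2 := hz (ι z)
    have e3 := hx' z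
    have e4 := hDpos z
    have e5 := ha (ι z)
    have e6 := ha x
    have e7 := hAell x
    set w := ι z
    have k1 : ⟪x + a, x⟫_ℝ = ⟪w, x⟫_ℝ - ⟪a, w⟫_ℝ := by
      refine mul_left_cancel₀ hΓ.ne' ?_
      rw [mul_sub]; linarith
    have k2 : 0 ≤ ⟪x + a, w⟫_ℝ - ⟪w, w⟫_ℝ := by
      refine nonneg_of_mul_nonneg_right (a := Γ) ?_ hΓ
      rw [mul_sub]; linarith
    have k3 : ⟪(2 : ℝ) • w - (x + a), x - a⟫_ℝ = ‖x + a‖ ^ 2 := by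
      rw [← real_inner_self_eq_norm_sq]
      simp only [inner_add_left, inner_add_right, inner_sub_left, inner_sub_right,
        real_inner_smul_left] at k1 ⊢
      rw [real_inner_comm w a, real_inner_comm x a] at *
      linarith
    have k4 : ‖(2 : ℝ) • w - (x + a)‖ ^ 2 ≤ ‖x + a‖ ^ 2 := by
      rw [norm_sub_sq_real, norm_smul, real_inner_smul_left, real_inner_comm]
      rw [real_inner_self_eq_norm_sq] at k2
      norm_num
      nlinarith
    have k5 : ‖x + a‖ ≤ ‖x - a‖ := by
      have c1 := real_inner_le_norm ((2 : ℝ) • w - (x + a)) (x - a)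
      have c2 := abs_le_of_sq_le_sq k4 (norm_nonneg _)
      have c3 := (le_abs_self _).trans c2
      rcases (norm_nonneg (x + a)).eq_or_lt with h0 | h0
      · rw [← h0]; exact norm_nonneg _
      · rw [k3] at c1
        refine le_of_mul_le_mul_left ?_ h0
        nlinarith [mul_le_mul_of_nonneg_right c3 (norm_nonneg (x - a))]
    have k6 : ‖x + a‖ ^ 2 ≤ ‖x - a‖ ^ 2 := pow_le_pow_left₀ (norm_nonneg _) k5 2
    rw [norm_add_sq_real, norm_sub_sq_real, real_inner_comm] at k6
    have k7 : ‖x‖ ^ 2 ≤ 0 := by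
      have k8 : ⟪a, x⟫_ℝ ≤ 0 := by linarith
      have : γ * ‖x‖ ^ 2 ≤ 0 := by nlinarith
      exact nonpos_of_mul_nonpos_right this hγ
    have : ‖x‖ = 0 := pow_eq_zero_iff (two_ne_zero) |>.mp (le_antisymm k7 (sq_nonneg _))
    exact norm_eq_zero.mp this
  have htop : LinearMap.range S = ⊤ := by
    haveI : CompleteSpace (LinearMap.range S) := hclosed.completeSpace_coe
    exact (Submodule.orthogonal_eq_bot_iff).mp horth
  intro F
  obtain ⟨u, hu⟩ := LinearMap.range_eq_top.mp htop (R.symm F)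
  have hTu : T u = F := R.symm.injective hu
  refine ⟨u, fun v => by rw [← hT, hTu], ?_, fun u' h => huniq u u' ?_⟩
  · rw [← hTu]; exact hest u
  · rw [hTu]; ext v; rw [hT, h]
end

section
/- (Abstract form of Theorem 3.6, well-posedness for a symmetric form.) For every F ∈ X' there exists a unique u ∈ V such that b(u, v) = F(v) for all v ∈ X, and this solution satisfies the a priori estimate ‖u‖_V ≤ c_s⁻¹ ‖F‖_{X'}, where c_s = √2·γ / (2·(1 + Γ²)). -/
open scoped InnerProductSpace

/-- Abstract form of Theorem 3.6: well-posedness of `b(u,v) = F(v)` for a symmetric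
bilinear form, with the a priori estimate `‖u‖_V ≤ c_s⁻¹ ‖F‖_{X'}`,
`c_s = √2·γ / (2·(1 + Γ²))`. -/
theorem wellposedness_symmetric
    {X : Type*} [NormedAddCommGroup X] [InnerProductSpace ℝ X] [CompleteSpace X]
    {V : Type*} [NormedAddCommGroup V] [NormedSpace ℝ V] [CompleteSpace V]
    (ι : V →ₗ[ℝ] X) (hι : Function.Injective ι)
    (D : V →ₗ[ℝ] (X →L[ℝ] ℝ))
    (hnormV : ∀ u : V, ‖u‖ = Real.sqrt (‖ι u‖ ^ 2 + ‖D u‖ ^ 2))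
    (γ Γ : ℝ) (hγ : 0 < γ) (hγΓ : γ ≤ Γ)
    (A : X →ₗ[ℝ] X →ₗ[ℝ] ℝ)
    (hAbdd : ∀ x y : X, |A x y| ≤ Γ * ‖x‖ * ‖y‖)
    (hAell : ∀ x : X, γ * ‖x‖ ^ 2 ≤ A x x)
    (hAsymm : ∀ x y : X, A x y = A y x)
    (hDpos : ∀ u : V, 0 ≤ D u (ι u))
    (haux : ∀ x : X, ∃ z : V,
      ∀ w : X, D z w + Γ * ⟪ι z, w⟫_ℝ = Γ * ⟪x, w⟫_ℝ) :
    ∀ F : X →L[ℝ] ℝ, ∃ u : V,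
      (∀ v : X, D u v + A (ι u) v = F v) ∧
      ‖u‖ ≤ (Real.sqrt 2 * γ / (2 * (1 + Γ ^ 2)))⁻¹ * ‖F‖ ∧
      (∀ u' : V, (∀ v : X, D u' v + A (ι u') v = F v) → u' = u) := by
  intro F
  have hΓ : 0 < Γ := lt_of_lt_of_le hγ hγΓ
  -- the defect form `Γ (x, y) - A (x, y)` is bounded by `Γ - γ`
  have hdef : ∀ x y : X, |Γ * ⟪x, y⟫_ℝ - A x y| ≤ (Γ - γ) * ‖x‖ * ‖y‖ := by
    intro x y
    let B : LinearMap.BilinForm ℝ X := Γ • (innerₗ X) - A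
    have hB : ∀ x y, B x y = Γ * ⟪x, y⟫_ℝ - A x y := fun x y => by simp [B]
    have hxx : ∀ x, 0 ≤ B x x := by
      intro x
      rw [hB, real_inner_self_eq_norm_sq]
      have := (abs_le.1 (hAbdd x x)).2
      nlinarith
    have hxx' : ∀ x, B x x ≤ (Γ - γ) * ‖x‖ ^ 2 := by
      intro x
      rw [hB, real_inner_self_eq_norm_sq]
      have := hAell x
      nlinarith
    have hsymm : B y x = B x y := by
      rw [hB, hB, hAsymm y x, real_inner_comm]
    have hcs : B x y * B y x ≤ B x x * B y y :=
      LinearMap.BilinForm.apply_mul_apply_le_of_forall_zero_le B hxx x y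
    rw [hsymm] at hcs
    rw [← hB]
    have h0 : 0 ≤ (Γ - γ) * ‖x‖ * ‖y‖ := by
      have : 0 ≤ Γ - γ := by linarith
      positivity
    refine abs_le_of_sq_le_sq ?_ h0
    calc B x y ^ 2 ≤ B x x * B y y := by rw [sq]; exact hcs
      _ ≤ ((Γ - γ) * ‖x‖ ^ 2) * ((Γ - γ) * ‖y‖ ^ 2) :=
        mul_le_mul (hxx' x) (hxx' y) (hxx y) ((hxx x).trans (hxx' x))
      _ = _ := by ring
  -- solvability of the auxiliary problem for all functionals
  have hsolve : ∀ x : X, ∃ z : V, ∀ w : X,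
      D z w + Γ * ⟪ι z, w⟫_ℝ = F w + (Γ * ⟪x, w⟫_ℝ - A x w) := by
    intro x
    let Ax : X →L[ℝ] ℝ := (A x).mkContinuous (Γ * ‖x‖) (fun y => hAbdd x y)
    let r : X := (InnerProductSpace.toDual ℝ X).symm (F - Ax)
    have hr : ∀ w, ⟪r, w⟫_ℝ = F w - A x w := fun w => by
      have h := InnerProductSpace.toDual_symm_apply (𝕜 := ℝ) (x := w) (y := F - Ax)
      exact h
    obtain ⟨z, hz⟩ := haux (Γ⁻¹ • r + x)
    refine ⟨z, fun w => ?_⟩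
    rw [hz w, inner_add_left, real_inner_smul_left, hr]
    field_simp
    ring
  choose S hS using hsolve
  have hlip : ∀ x y : X, ‖ι (S x) - ι (S y)‖ ≤ ((Γ - γ) / Γ) * ‖x - y‖ := by
    intro x y
    set d := S x - S y with hd
    have hιd : ι (S x) - ι (S y) = ι d := by simp [hd]
    rw [hιd]
    have h1 : D d (ι d) + Γ * ⟪ι d, ι d⟫_ℝ = Γ * ⟪x - y, ι d⟫_ℝ - A (x - y) (ι d) := by
      have e1 := hS x (ι d)
      have e2 := hS y (ι d)
      have e3 : D d (ι d) = D (S x) (ι d) - D (S y) (ι d) := by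
        conv_lhs => rw [hd, map_sub]
        rfl
      have e4 : ⟪ι d, ι d⟫_ℝ = ⟪ι (S x), ι d⟫_ℝ - ⟪ι (S y), ι d⟫_ℝ := by
        rw [← inner_sub_left, hιd]
      have e5 : A (x - y) (ι d) = A x (ι d) - A y (ι d) := by
        rw [map_sub A, LinearMap.sub_apply]
      rw [e3, e4, e5, inner_sub_left x y]
      linarith
    rw [real_inner_self_eq_norm_sq] at h1
    have h2 := (abs_le.1 (hdef (x - y) (ι d))).2
    have h3 := hDpos d
    rw [div_mul_eq_mul_div, le_div_iff₀ hΓ]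
    rcases (norm_nonneg (ι d)).eq_or_lt with h | h
    · rw [← h, zero_mul]
      exact mul_nonneg (by linarith) (norm_nonneg _)
    · refine le_of_mul_le_mul_right ?_ h
      nlinarith
  have hK0 : 0 ≤ (Γ - γ) / Γ := div_nonneg (by linarith) hΓ.le
  have hcontr : ContractingWith (NNReal.mk ((Γ - γ) / Γ) hK0) (fun x => ι (S x)) := by
    refine ⟨?_, LipschitzWith.of_dist_le_mul fun x y => ?_⟩
    · rw [← NNReal.coe_lt_coe]
      change (Γ - γ) / Γ < 1
      rw [div_lt_one hΓ]
      linarith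
    · rw [dist_eq_norm, dist_eq_norm]
      exact hlip x y
  have : Nonempty X := ⟨0⟩
  let x₀ : X := ContractingWith.fixedPoint _ hcontr
  have hx₀ : ι (S x₀) = x₀ := hcontr.fixedPoint_isFixedPt
  have hu : ∀ v : X, D (S x₀) v + A (ι (S x₀)) v = F v := by
    intro v
    have := hS x₀ v
    rw [hx₀] at this ⊢
    linarith
  -- basic energy estimate
  have hen : ∀ (u : V) (G : X →L[ℝ] ℝ), (∀ v, D u v + A (ι u) v = G v) →
      γ * ‖ι u‖ ≤ ‖G‖ := by
    intro u G h
    have h1 := h (ι u)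
    have h2 := hDpos u
    have h3 := hAell (ι u)
    have h4 := (le_abs_self _).trans (G.le_opNorm (ι u))
    rcases (norm_nonneg (ι u)).eq_or_lt with h | h
    · rw [← h, mul_zero]
      exact norm_nonneg _
    · refine le_of_mul_le_mul_right ?_ h
      nlinarith
  refine ⟨S x₀, hu, ?_, ?_⟩
  · generalize S x₀ = u at hu
    have hp := hen u F hu
    have hD : ‖D u‖ ≤ ‖F‖ + Γ * ‖ι u‖ := by
      refine ContinuousLinearMap.opNorm_le_bound _ (by positivity) fun v => ?_
      have e : D u v = F v - A (ι u) v := by linarith [hu v]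
      rw [e, Real.norm_eq_abs]
      have h1 := abs_sub (F v) (A (ι u) v)
      have h2 := hAbdd (ι u) v
      have h3 : |F v| ≤ ‖F‖ * ‖v‖ := F.le_opNorm v
      linarith
    have hc : (Real.sqrt 2 * γ / (2 * (1 + Γ ^ 2)))⁻¹ = Real.sqrt 2 * (1 + Γ ^ 2) / γ := by
      have h2 : Real.sqrt 2 * Real.sqrt 2 = 2 := Real.mul_self_sqrt (by norm_num)
      have h3 : Real.sqrt 2 ≠ 0 := by positivity
      field_simp
      nlinarith
    rw [hc, hnormV]
    have hf := norm_nonneg F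
    have hq := norm_nonneg (D u)
    have hp0 := norm_nonneg (ι u)
    apply Real.sqrt_le_iff.2
    refine ⟨by positivity, ?_⟩
    have h2 : Real.sqrt 2 ^ 2 = 2 := Real.sq_sqrt (by norm_num)
    have e : (Real.sqrt 2 * (1 + Γ ^ 2) / γ * ‖F‖) ^ 2 =
        2 * (1 + Γ ^ 2) ^ 2 * ‖F‖ ^ 2 / γ ^ 2 := by
      rw [mul_pow, div_pow, mul_pow, h2]; ring
    rw [e, le_div_iff₀ (by positivity)]
    have a1 : (γ * ‖ι u‖) ^ 2 ≤ ‖F‖ ^ 2 := pow_le_pow_left₀ (by positivity) hp 2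
    have a2 : γ * ‖D u‖ ≤ 2 * Γ * ‖F‖ := by
      have b1 := mul_le_mul_of_nonneg_left hD hγ.le
      have b2 := mul_le_mul_of_nonneg_left hp hΓ.le
      have b3 := mul_le_mul_of_nonneg_right hγΓ hf
      nlinarith
    have a3 : (γ * ‖D u‖) ^ 2 ≤ (2 * Γ * ‖F‖) ^ 2 := pow_le_pow_left₀ (by positivity) a2 2
    have a4 : 0 ≤ (1 + 2 * (Γ ^ 2) ^ 2) * ‖F‖ ^ 2 := by positivity
    nlinarith
  · intro u' hu'
    have h := hen (u' - S x₀) 0 (fun v => by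
      have h1 := hu v
      have h2 := hu' v
      simp only [map_sub, LinearMap.sub_apply, ContinuousLinearMap.sub_apply,
        ContinuousLinearMap.zero_apply]
      linarith)
    rw [norm_zero] at h
    have h0 : ι (u' - S x₀) = 0 := by
      rw [← norm_le_zero_iff]
      by_contra hn
      push Not at hn
      nlinarith [mul_pos hγ hn]
    rw [map_sub, sub_eq_zero] at h0
    exact hι h0
end

section
/- (Abstract form of Lemma 3.4, inf-sup inequality.) For every u ∈ V with u ≠ 0 there exists v ∈ X with v ≠ 0 such that b(u, v) ≥ c_s ‖u‖_V ‖v‖_X, where c_s := √2·γ / (2·(1 + Γ²)); equivalently, the inf-sup inequality inf_{0≠u∈V} sup_{0≠v∈X} b(u, v)/(‖u‖_V ‖v‖_X) ≥ c_s holds. -/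
open scoped RealInnerProductSpace

/-- Abstract form of Lemma 3.4 (inf-sup inequality): for every `u ∈ V`, `u ≠ 0`,
there is `v ∈ X`, `v ≠ 0` with `b(u,v) ≥ c_s ‖u‖_V ‖v‖_X`,
where `c_s = √2·γ / (2·(1 + Γ²))`. -/
theorem infsup_inequality
    {X : Type*} [NormedAddCommGroup X] [InnerProductSpace ℝ X] [CompleteSpace X]
    {V : Type*} [AddCommGroup V] [Module ℝ V]
    (ι : V →ₗ[ℝ] X) (hι : Function.Injective ι)
    (D : V →ₗ[ℝ] (X →L[ℝ] ℝ))
    (γ Γ : ℝ) (hγ : 0 < γ) (hγΓ : γ ≤ Γ)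
    (A : X →ₗ[ℝ] X →ₗ[ℝ] ℝ)
    (hAbdd : ∀ x y : X, |A x y| ≤ Γ * ‖x‖ * ‖y‖)
    (hAell : ∀ x : X, γ * ‖x‖ ^ 2 ≤ A x x)
    (hDpos : ∀ u : V, 0 ≤ D u (ι u)) :
    ∀ u : V, u ≠ 0 → ∃ v : X, v ≠ 0 ∧
      Real.sqrt 2 * γ / (2 * (1 + Γ ^ 2)) *
          (Real.sqrt (‖ι u‖ ^ 2 + ‖D u‖ ^ 2) * ‖v‖)
        ≤ D u v + A (ι u) v := by
  intro u hu
  have hx : 0 < ‖ι u‖ := by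
    rw [norm_pos_iff]
    intro h
    exact hu (hι (by rw [h, map_zero]))
  have hΓ : 0 < Γ := lt_of_lt_of_le hγ hγΓ
  let a : X →L[ℝ] ℝ := (A (ι u)).mkContinuous (Γ * ‖ι u‖) (fun y => hAbdd (ι u) y)
  have ha : ∀ y, a y = A (ι u) y := fun y => rfl
  have han : ‖a‖ ≤ Γ * ‖ι u‖ := LinearMap.mkContinuous_norm_le _ (by positivity) _
  obtain ⟨v, hv⟩ := (InnerProductSpace.toDual ℝ X).surjective (D u + a)
  have hvn : ‖v‖ = ‖D u + a‖ := by
    rw [← hv, LinearIsometryEquiv.norm_map]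
  have hvv : D u v + A (ι u) v = ‖v‖ ^ 2 := by
    have h : (D u + a) v = inner ℝ v v := by
      rw [← hv, InnerProductSpace.toDual_apply_apply]
    rw [real_inner_self_eq_norm_sq] at h
    exact h
  have h1 : γ * ‖ι u‖ ≤ ‖v‖ := by
    have h2 : (D u + a) (ι u) ≤ ‖D u + a‖ * ‖ι u‖ :=
      (le_abs_self _).trans ((D u + a).le_opNorm (ι u))
    have h3 : (D u + a) (ι u) = D u (ι u) + A (ι u) (ι u) := rfl
    rw [← hvn, h3] at h2
    have h4 := hAell (ι u)
    have h5 := hDpos u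
    have h6 : γ * ‖ι u‖ * ‖ι u‖ ≤ ‖v‖ * ‖ι u‖ := by nlinarith
    exact le_of_mul_le_mul_right h6 hx
  have hF : 0 < ‖v‖ := lt_of_lt_of_le (by positivity) h1
  have h2 : ‖D u‖ ≤ ‖v‖ + Γ * ‖ι u‖ := by
    have h3 : ‖D u‖ ≤ ‖D u + a‖ + ‖a‖ := by
      simpa using norm_sub_le (D u + a) a
    rw [hvn]
    linarith
  have h3 : γ * ‖D u‖ ≤ 2 * Γ * ‖v‖ := by
    have e1 := mul_le_mul_of_nonneg_left h2 hγ.le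
    have e2 := mul_le_mul_of_nonneg_left h1 hΓ.le
    have e3 := mul_le_mul_of_nonneg_right hγΓ hF.le
    nlinarith
  refine ⟨v, norm_pos_iff.mp hF, ?_⟩
  rw [hvv]
  have hs2 : Real.sqrt 2 ^ 2 = 2 := Real.sq_sqrt (by norm_num)
  have hS2 : Real.sqrt (‖ι u‖ ^ 2 + ‖D u‖ ^ 2) ^ 2 = ‖ι u‖ ^ 2 + ‖D u‖ ^ 2 :=
    Real.sq_sqrt (by positivity)
  set S := Real.sqrt (‖ι u‖ ^ 2 + ‖D u‖ ^ 2) with hS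
  have e1 : (γ * ‖ι u‖) ^ 2 ≤ ‖v‖ ^ 2 := pow_le_pow_left₀ (by positivity) h1 2
  have e2 : (γ * ‖D u‖) ^ 2 ≤ (2 * Γ * ‖v‖) ^ 2 := pow_le_pow_left₀ (by positivity) h3 2
  have key : Real.sqrt 2 * γ * S ≤ ‖v‖ * (2 * (1 + Γ ^ 2)) := by
    refine (sq_le_sq₀ (by positivity) (by positivity)).mp ?_
    have e3 : (Real.sqrt 2 * γ * S) ^ 2 = 2 * ((γ * ‖ι u‖) ^ 2 + (γ * ‖D u‖) ^ 2) := by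
      rw [mul_pow, mul_pow, hs2, hS2]; ring
    rw [e3]
    have e4 : 0 ≤ ‖v‖ ^ 2 * (2 + 4 * Γ ^ 4) := by positivity
    nlinarith
  have h5 : Real.sqrt 2 * γ / (2 * (1 + Γ ^ 2)) * S ≤ ‖v‖ := by
    rw [div_mul_eq_mul_div, div_le_iff₀ (by positivity)]
    exact key
  rw [← mul_assoc, sq ‖v‖]
  exact mul_le_mul_of_nonneg_right h5 hF.le
end

section
/- (Abstract form of Lemma 3.5, injectivity of the adjoint in the symmetric case.) If v ∈ X satisfies b(u, v) = 0 for all u ∈ V, then v = 0. -/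
open scoped InnerProductSpace

/-- Abstract form of Lemma 3.5 (injectivity of the adjoint in the symmetric case):
if `v ∈ X` satisfies `b(u,v) = 0` for all `u ∈ V`, then `v = 0`. -/
theorem adjoint_injective_symmetric
    {X : Type*} [NormedAddCommGroup X] [InnerProductSpace ℝ X] [CompleteSpace X]
    {V : Type*} [AddCommGroup V] [Module ℝ V]
    (ι : V →ₗ[ℝ] X) (hι : Function.Injective ι)
    (D : V →ₗ[ℝ] (X →L[ℝ] ℝ))
    (γ Γ : ℝ) (hγ : 0 < γ) (hγΓ : γ ≤ Γ)
    (A : X →ₗ[ℝ] X →ₗ[ℝ] ℝ)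
    (hAbdd : ∀ x y : X, |A x y| ≤ Γ * ‖x‖ * ‖y‖)
    (hAell : ∀ x : X, γ * ‖x‖ ^ 2 ≤ A x x)
    (hAsymm : ∀ x y : X, A x y = A y x)
    (hDpos : ∀ u : V, 0 ≤ D u (ι u))
    (haux : ∀ x : X, ∃ z : V,
      ∀ w : X, D z w + Γ * ⟪ι z, w⟫_ℝ = Γ * ⟪x, w⟫_ℝ)
    (v : X) (hv : ∀ u : V, D u v + A (ι u) v = 0) :
    v = 0 := by
  obtain ⟨z, hz⟩ := haux v
  have hΓ : 0 < Γ := lt_of_lt_of_le hγ hγΓ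
  have h1 := hz v
  have h2 := hv z
  have h3 := hz (ι z)
  have h4 := hDpos z
  rw [real_inner_self_eq_norm_sq] at h1 h3
  have hs := norm_sub_sq_real (ι z) v
  have hcomm := real_inner_comm (ι z) v
  -- `‖z‖² ≤ ⟪z, v⟫`, hence `‖z‖² ≤ ‖v‖²`
  have h5 : ‖ι z‖ ^ 2 ≤ ⟪ι z, v⟫_ℝ := by
    have : Γ * ‖ι z‖ ^ 2 ≤ Γ * ⟪ι z, v⟫_ℝ := by
      rw [← hcomm] at *
      linarith
    exact le_of_mul_le_mul_left this hΓ
  have h6 : ‖ι z‖ ^ 2 ≤ ‖v‖ ^ 2 := by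
    have := sq_nonneg ‖ι z - v‖
    linarith
  -- positivity of `Γ (·,·) - A` on the difference
  have h7 : A (ι z - v) (ι z - v) ≤ Γ * ‖ι z - v‖ ^ 2 := by
    have := (le_abs_self _).trans (hAbdd (ι z - v) (ι z - v))
    linarith [this, sq ‖ι z - v‖, mul_assoc Γ ‖ι z - v‖ ‖ι z - v‖, congrArg (Γ * ·) (sq ‖ι z - v‖)]
  have h8 : A (ι z - v) (ι z - v) = A (ι z) (ι z) - 2 * A (ι z) v + A v v := by
    simp only [map_sub, LinearMap.sub_apply, hAsymm v (ι z)]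
    ring
  rw [h8, hs] at h7
  have h9 := hAell (ι z)
  have h10 := hAell v
  have h11 : (Γ - γ) * ‖ι z‖ ^ 2 ≤ (Γ - γ) * ‖v‖ ^ 2 :=
    mul_le_mul_of_nonneg_left h6 (by linarith)
  have h12 : γ * ‖v‖ ^ 2 ≤ 0 := by nlinarith
  have h13 : ‖v‖ ^ 2 ≤ 0 := by
    by_contra h
    push Not at h
    linarith [mul_pos hγ h]
  have h14 : ‖v‖ ^ 2 = 0 := le_antisymm h13 (sq_nonneg _)
  exact norm_eq_zero.mp (pow_eq_zero_iff (two_ne_zero) |>.mp h14)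
end

section
/- (Perturbation of a coercive isomorphism by an antisymmetric operator; the core of the proof of Theorem 3.8.) Let B : V → X' be a bounded linear bijection satisfying ⟨B u, ι u⟩ ≥ γ ‖ι u‖_X² for all u ∈ V, and let C : X → X' be a bounded linear map satisfying ⟨C x, x⟩ = 0 for all x ∈ X. Then the bounded linear map u ↦ B u + C(ι u) from V to X' is a bijection, and for every F ∈ X' the unique u ∈ V with B u + C(ι u) = F satisfies ‖ι u‖_X ≤ γ⁻¹ ‖F‖_{X'}. -/
theorem coercive_bound
    {X : Type*} [NormedAddCommGroup X] [InnerProductSpace ℝ X]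
    (γ : ℝ) (hγ : 0 < γ) (x : X) (F : X →L[ℝ] ℝ) (h : γ * ‖x‖ ^ 2 ≤ F x) :
    ‖x‖ ≤ γ⁻¹ * ‖F‖ := by
  rw [← div_eq_inv_mul, le_div_iff₀ hγ]
  rcases (norm_nonneg x).eq_or_lt with h0 | h0
  · rw [← h0]; simp
  · have h1 : F x ≤ ‖F‖ * ‖x‖ := (le_abs_self _).trans (F.le_opNorm x)
    nlinarith

theorem small_perturbation
    {X : Type*} [NormedAddCommGroup X] [InnerProductSpace ℝ X] [CompleteSpace X]
    {V : Type*} [NormedAddCommGroup V] [NormedSpace ℝ V] [CompleteSpace V]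
    {Y : Type*} [NormedAddCommGroup Y] [NormedSpace ℝ Y] [CompleteSpace Y]
    (ι : V →L[ℝ] X) (γ : ℝ) (hγ : 0 < γ)
    (B : V →L[ℝ] Y) (hBbij : Function.Bijective B)
    (hBcoer : ∀ u : V, ‖ι u‖ ≤ γ⁻¹ * ‖B u‖)
    (C : X →L[ℝ] Y) (hC : ‖C‖ < γ) :
    Function.Bijective (B + C.comp ι) := by
  let e : V ≃L[ℝ] Y := ContinuousLinearEquiv.ofBijective B
    (LinearMap.ker_eq_bot.2 hBbij.1) (LinearMap.range_eq_top.2 hBbij.2)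
  have he : ∀ u, e u = B u := fun u => rfl
  let K : Y →L[ℝ] X := ι.comp (e.symm : Y →L[ℝ] V)
  have hK : ‖K‖ ≤ γ⁻¹ := by
    refine K.opNorm_le_bound (by positivity) fun F => ?_
    have := hBcoer (e.symm F)
    rw [← he, e.apply_symm_apply] at this
    exact this
  let T : Y →L[ℝ] Y := -(C.comp K)
  have hT : ‖T‖ < 1 := by
    have h1 : ‖T‖ ≤ ‖C‖ * ‖K‖ := by
      simp only [T, norm_neg]; exact C.opNorm_comp_le K
    have h2 : ‖C‖ * ‖K‖ ≤ ‖C‖ * γ⁻¹ := by gcongr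
    have h3 : ‖C‖ * γ⁻¹ < 1 := by
      rw [← div_eq_mul_inv, div_lt_one hγ]; exact hC
    linarith
  have hu : IsUnit (1 - T) := isUnit_one_sub_of_norm_lt_one hT
  have hb : Function.Bijective (⇑(1 - T : Y →L[ℝ] Y)) := by
    obtain ⟨w, hw⟩ := hu
    rw [← hw]
    exact (ContinuousLinearEquiv.ofUnit w).bijective
  have heq : (⇑(B + C.comp ι) : V → Y) = ⇑(1 - T : Y →L[ℝ] Y) ∘ B := by
    funext u
    have : e.symm (B u) = u := by rw [← he, e.symm_apply_apply]
    simp [T, K, this]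
  rw [heq]
  exact hb.comp hBbij

theorem continuation
    {X : Type*} [NormedAddCommGroup X] [InnerProductSpace ℝ X] [CompleteSpace X]
    {V : Type*} [NormedAddCommGroup V] [NormedSpace ℝ V] [CompleteSpace V]
    {Y : Type*} [NormedAddCommGroup Y] [NormedSpace ℝ Y] [CompleteSpace Y]
    (ι : V →L[ℝ] X) (γ : ℝ) (hγ : 0 < γ)
    (B : V →L[ℝ] Y) (hBbij : Function.Bijective B) (C : X →L[ℝ] Y)
    (hb : ∀ (t : ℝ) (u : V), ‖ι u‖ ≤ γ⁻¹ * ‖B u + t • C (ι u)‖) :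
    Function.Bijective (fun u : V => B u + C (ι u)) := by
  obtain ⟨N, hN⟩ := exists_nat_gt (‖C‖ / γ)
  have hN0 : (0 : ℝ) < N := lt_of_le_of_lt (by positivity) hN
  have hsmall : ‖((N : ℝ)⁻¹) • C‖ < γ := by
    rw [norm_smul, norm_inv, Real.norm_natCast, ← div_eq_inv_mul, div_lt_iff₀ hN0]
    rw [div_lt_iff₀ hγ] at hN
    linarith
  have step : ∀ n : ℕ,
      Function.Bijective (B + (n : ℝ) • ((N : ℝ)⁻¹ • C).comp ι) := by
    intro n
    induction n with
    | zero => simpa using hBbij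
    | succ n ih =>
      have := small_perturbation ι γ hγ _ ih
        (by intro u; simpa [smul_smul] using hb ((n : ℝ) * (N : ℝ)⁻¹) u) _ hsmall
      rw [Nat.cast_succ, add_smul, one_smul, ← add_assoc]
      exact this
  convert step N using 1
  funext u
  simp [smul_smul, mul_inv_cancel₀ hN0.ne']

/-- Perturbation of a coercive isomorphism by an antisymmetric operator (the core of
the proof of Theorem 3.8): if `B : V → X'` is a bounded linear bijection with
`⟨B u, ι u⟩ ≥ γ ‖ι u‖²` and `C : X → X'` is bounded linear with `⟨C x, x⟩ = 0`, then
`u ↦ B u + C (ι u)` is a bijection and any solution `u` of `B u + C (ι u) = F`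
satisfies `‖ι u‖ ≤ γ⁻¹ ‖F‖`. -/
theorem perturbation_antisymmetric
    {X : Type*} [NormedAddCommGroup X] [InnerProductSpace ℝ X] [CompleteSpace X]
    {V : Type*} [NormedAddCommGroup V] [NormedSpace ℝ V] [CompleteSpace V]
    (ι : V →L[ℝ] X) (γ : ℝ) (hγ : 0 < γ)
    (B : V →L[ℝ] (X →L[ℝ] ℝ)) (hBbij : Function.Bijective B)
    (hBcoer : ∀ u : V, γ * ‖ι u‖ ^ 2 ≤ B u (ι u))
    (C : X →L[ℝ] (X →L[ℝ] ℝ)) (hC : ∀ x : X, C x x = 0) :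
    Function.Bijective (fun u : V => B u + C (ι u)) ∧
      ∀ (F : X →L[ℝ] ℝ) (u : V), B u + C (ι u) = F → ‖ι u‖ ≤ γ⁻¹ * ‖F‖ := by
  have key : ∀ u : V, γ * ‖ι u‖ ^ 2 ≤ (B u + C (ι u)) (ι u) := by
    intro u
    simpa [hC] using hBcoer u
  refine ⟨?_, ?_⟩
  · refine continuation ι γ hγ B hBbij C fun t u => coercive_bound γ hγ _ _ ?_
    have h : (B u + t • C (ι u)) (ι u) = B u (ι u) + t * C (ι u) (ι u) := rfl
    rw [h, hC, mul_zero, add_zero]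
    exact hBcoer u
  · intro F u h
    exact coercive_bound γ hγ _ F (h ▸ key u)
end

section
/- (Induction step in the proof of Theorem 3.8.) Let T : V → X' be a bounded linear bijection satisfying ⟨T u, ι u⟩ ≥ γ ‖ι u‖_X² for all u ∈ V, and let C : X → X' be a bounded linear map with ⟨C x, x⟩ = 0 for all x ∈ X and operator norm ‖C‖_{L(X,X')} ≤ γ/2. Then T + C∘ι : V → X' is a bounded linear bijection and satisfies ⟨(T + C∘ι) u, ι u⟩ ≥ γ ‖ι u‖_X² for all u ∈ V (hence also ‖ι u‖_X ≤ γ⁻¹ ‖(T + C∘ι) u‖_{X'} for all u ∈ V). -/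
/-- Induction step in the proof of Theorem 3.8: if `T : V → X'` is a bounded linear
bijection with `⟨T u, ι u⟩ ≥ γ ‖ι u‖²` and `C : X → X'` is bounded linear,
antisymmetric (`⟨C x, x⟩ = 0`) with `‖C‖ ≤ γ/2`, then `T + C∘ι` is a bijection,
satisfies the same coercivity bound, and hence `‖ι u‖ ≤ γ⁻¹ ‖(T + C∘ι) u‖`. -/
theorem perturbation_induction_step
    {X : Type*} [NormedAddCommGroup X] [InnerProductSpace ℝ X] [CompleteSpace X]
    {V : Type*} [NormedAddCommGroup V] [NormedSpace ℝ V] [CompleteSpace V]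
    (ι : V →L[ℝ] X) (γ : ℝ) (hγ : 0 < γ)
    (T : V →L[ℝ] (X →L[ℝ] ℝ)) (hTbij : Function.Bijective T)
    (hTcoer : ∀ u : V, γ * ‖ι u‖ ^ 2 ≤ T u (ι u))
    (C : X →L[ℝ] (X →L[ℝ] ℝ)) (hC : ∀ x : X, C x x = 0)
    (hCnorm : ‖C‖ ≤ γ / 2) :
    Function.Bijective (fun u : V => T u + C (ι u)) ∧
      (∀ u : V, γ * ‖ι u‖ ^ 2 ≤ (T u + C (ι u)) (ι u)) ∧
      (∀ u : V, ‖ι u‖ ≤ γ⁻¹ * ‖T u + C (ι u)‖) := by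
  have key : ∀ (S : X →L[ℝ] ℝ) (x : X), γ * ‖x‖ ^ 2 ≤ S x → ‖x‖ ≤ γ⁻¹ * ‖S‖ := by
    intro S x h
    rw [inv_mul_eq_div, le_div_iff₀ hγ]
    rcases (norm_nonneg x).eq_or_lt with h0 | h0
    · rw [← h0]
      simp
    · have h1 : S x ≤ ‖S‖ * ‖x‖ := (le_abs_self _).trans (S.le_opNorm x)
      have h2 : (‖x‖ * γ) * ‖x‖ ≤ ‖S‖ * ‖x‖ := by nlinarith
      exact le_of_mul_le_mul_right h2 h0
  have hco : ∀ u : V, γ * ‖ι u‖ ^ 2 ≤ (T u + C (ι u)) (ι u) := by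
    intro u
    simpa [hC] using hTcoer u
  have hb : ∀ u : V, ‖ι u‖ ≤ γ⁻¹ * ‖T u + C (ι u)‖ := fun u => key _ _ (hco u)
  refine ⟨⟨?_, ?_⟩, hco, hb⟩
  · intro u v huv
    have h0 : T (u - v) + C (ι (u - v)) = 0 := by
      have : T u + C (ι u) = T v + C (ι v) := huv
      simp only [map_sub]
      rw [sub_add_sub_comm, this, sub_self]
    have h1 : ι (u - v) = 0 := by
      have := hb (u - v)
      rw [h0] at this
      simpa using this
    rw [h1, map_zero, add_zero, map_sub, sub_eq_zero] at h0
    exact hTbij.1 h0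
  · intro f
    choose R hR using hTbij.2
    have hlip : ContractingWith (1 / 2) (fun g : X →L[ℝ] ℝ => f - C (ι (R g))) := by
      refine ⟨by rw [← NNReal.coe_lt_coe]; norm_num, LipschitzWith.of_dist_le_mul ?_⟩
      intro g g'
      have h1 : ‖ι (R g' - R g)‖ ≤ γ⁻¹ * ‖g' - g‖ := by
        have := key _ _ (hTcoer (R g' - R g))
        rwa [map_sub T, hR, hR] at this
      have h2 : ‖C (ι (R g' - R g))‖ ≤ γ / 2 * (γ⁻¹ * ‖g' - g‖) :=
        (C.le_opNorm _).trans (mul_le_mul hCnorm h1 (norm_nonneg _) (by positivity))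
      have h3 : γ / 2 * (γ⁻¹ * ‖g' - g‖) = 1 / 2 * ‖g' - g‖ := by field_simp
      rw [h3, map_sub, map_sub] at h2
      rw [dist_eq_norm, dist_comm, dist_eq_norm, sub_sub_sub_cancel_left]
      simpa using h2
    have hfix := hlip.fixedPoint_isFixedPt
    refine ⟨R (ContractingWith.fixedPoint _ hlip), ?_⟩
    have h4 := hfix.eq
    simp only [hR]
    exact (eq_sub_iff_add_eq.mp h4.symm)
end

section
/- (Constructive test-function estimate from the proof of Lemma 3.4.) For every u ∈ V there exists v ∈ X with ‖v‖_X ≤ √2·δ·‖u‖_V and b(u, v) ≥ (1/2)‖u‖_V², where δ := (1 + Γ²)/(2γ); note δ ≥ 1 since Γ ≥ γ > 0. (In the paper's proof v = z + δ·ι u, with z ∈ X the Riesz representative of D u ∈ X'.) -/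
open scoped RealInnerProductSpace

/-- Constructive test-function estimate from the proof of Lemma 3.4: for every `u ∈ V`
there is `v ∈ X` with `‖v‖_X ≤ √2·δ·‖u‖_V` and `b(u,v) ≥ (1/2)‖u‖_V²`,
where `δ = (1 + Γ²)/(2γ)`. -/
theorem testfunction_estimate
    {X : Type*} [NormedAddCommGroup X] [InnerProductSpace ℝ X] [CompleteSpace X]
    {V : Type*} [AddCommGroup V] [Module ℝ V]
    (ι : V →ₗ[ℝ] X) (hι : Function.Injective ι)
    (D : V →ₗ[ℝ] (X →L[ℝ] ℝ))
    (γ Γ : ℝ) (hγ : 0 < γ) (hγΓ : γ ≤ Γ)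
    (A : X →ₗ[ℝ] X →ₗ[ℝ] ℝ)
    (hAbdd : ∀ x y : X, |A x y| ≤ Γ * ‖x‖ * ‖y‖)
    (hAell : ∀ x : X, γ * ‖x‖ ^ 2 ≤ A x x)
    (hDpos : ∀ u : V, 0 ≤ D u (ι u)) :
    ∀ u : V, ∃ v : X,
      ‖v‖ ≤ Real.sqrt 2 * ((1 + Γ ^ 2) / (2 * γ)) *
          Real.sqrt (‖ι u‖ ^ 2 + ‖D u‖ ^ 2) ∧
      (1 / 2) * Real.sqrt (‖ι u‖ ^ 2 + ‖D u‖ ^ 2) ^ 2 ≤ D u v + A (ι u) v := by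
  intro u
  set δ : ℝ := (1 + Γ ^ 2) / (2 * γ) with hδ
  have hδγ : δ * γ = (1 + Γ ^ 2) / 2 := by
    rw [hδ]; field_simp
  have hδ1 : 1 ≤ δ := by
    rw [hδ, le_div_iff₀ (by positivity)]
    nlinarith [sq_nonneg (Γ - 1)]
  set z : X := (InnerProductSpace.toDual ℝ X).symm (D u) with hz
  have hzn : ‖z‖ = ‖D u‖ := by
    rw [hz]; exact LinearIsometryEquiv.norm_map _ _
  have hDz : D u z = ‖D u‖ ^ 2 := by
    rw [← hzn, ← real_inner_self_eq_norm_sq]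
    conv_rhs => rw [hz]
    rw [InnerProductSpace.toDual_symm_apply]
  have hx := norm_nonneg (ι u)
  have hd := norm_nonneg (D u)
  refine ⟨z + δ • ι u, ?_, ?_⟩
  · have h1 : ‖z + δ • ι u‖ ≤ ‖D u‖ + δ * ‖ι u‖ := by
      refine (norm_add_le _ _).trans ?_
      rw [norm_smul, hzn, Real.norm_of_nonneg (by linarith)]
    have h2 : ‖ι u‖ + ‖D u‖ ≤ Real.sqrt 2 * Real.sqrt (‖ι u‖ ^ 2 + ‖D u‖ ^ 2) := by
      rw [← Real.sqrt_mul (by norm_num)]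
      apply Real.le_sqrt_of_sq_le
      nlinarith [sq_nonneg (‖ι u‖ - ‖D u‖)]
    have h3 := mul_le_mul_of_nonneg_left h2 (by linarith : (0 : ℝ) ≤ δ)
    nlinarith
  · rw [Real.sq_sqrt (by positivity)]
    simp only [map_add, map_smul, smul_eq_mul, hDz]
    have h1 := (abs_le.mp (hAbdd (ι u) z)).1
    rw [hzn] at h1
    have h2 := mul_le_mul_of_nonneg_left (hAell (ι u)) (by linarith : (0 : ℝ) ≤ δ)
    rw [← mul_assoc, hδγ] at h2
    have h3 : 0 ≤ δ * D u (ι u) := mul_nonneg (by linarith) (hDpos u)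
    nlinarith [sq_nonneg (Γ * ‖ι u‖ - ‖D u‖)]
end

section
/- (A priori estimate, the bound (3.23)/(3.25) of Theorems 3.6 and 3.8.) If u ∈ V and F ∈ X' satisfy b(u, v) = F(v) for all v ∈ X, then ‖u‖_V ≤ (2·(1 + Γ²)/(√2·γ)) ‖F‖_{X'}. -/
open scoped RealInnerProductSpace

/-- A priori estimate (the bound (3.23)/(3.25) of Theorems 3.6 and 3.8):
if `b(u,v) = F(v)` for all `v ∈ X`, then `‖u‖_V ≤ (2·(1 + Γ²)/(√2·γ)) ‖F‖_{X'}`. -/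
theorem apriori_estimate
    {X : Type*} [NormedAddCommGroup X] [InnerProductSpace ℝ X] [CompleteSpace X]
    {V : Type*} [AddCommGroup V] [Module ℝ V]
    (ι : V →ₗ[ℝ] X) (hι : Function.Injective ι)
    (D : V →ₗ[ℝ] (X →L[ℝ] ℝ))
    (γ Γ : ℝ) (hγ : 0 < γ) (hγΓ : γ ≤ Γ)
    (A : X →ₗ[ℝ] X →ₗ[ℝ] ℝ)
    (hAbdd : ∀ x y : X, |A x y| ≤ Γ * ‖x‖ * ‖y‖)
    (hAell : ∀ x : X, γ * ‖x‖ ^ 2 ≤ A x x)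
    (hDpos : ∀ u : V, 0 ≤ D u (ι u))
    (u : V) (F : X →L[ℝ] ℝ)
    (hu : ∀ v : X, D u v + A (ι u) v = F v) :
    Real.sqrt (‖ι u‖ ^ 2 + ‖D u‖ ^ 2)
      ≤ 2 * (1 + Γ ^ 2) / (Real.sqrt 2 * γ) * ‖F‖ := by
  have hΓ : 0 < Γ := lt_of_lt_of_le hγ hγΓ
  have hx0 : 0 ≤ ‖ι u‖ := norm_nonneg _
  have hf0 : 0 ≤ ‖F‖ := norm_nonneg _
  have hd0 : 0 ≤ ‖D u‖ := norm_nonneg _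
  have hx : γ * ‖ι u‖ ≤ ‖F‖ := by
    have h1 := hAell (ι u)
    have h2 := hDpos u
    have h3 := hu (ι u)
    have h4 : F (ι u) ≤ ‖F‖ * ‖ι u‖ := (le_abs_self _).trans (F.le_opNorm (ι u))
    rcases hx0.eq_or_lt with h | h
    · rw [← h]; simpa using hf0
    · refine le_of_mul_le_mul_right ?_ h
      nlinarith
  have hd : ‖D u‖ ≤ ‖F‖ + Γ * ‖ι u‖ := by
    refine ContinuousLinearMap.opNorm_le_bound _ (by positivity) fun v => ?_
    have h1 : D u v = F v - A (ι u) v := by linarith [hu v]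
    have h2 := hAbdd (ι u) v
    have h3 : |F v| ≤ ‖F‖ * ‖v‖ := F.le_opNorm v
    rw [h1, Real.norm_eq_abs]
    have h4 := abs_sub (F v) (A (ι u) v)
    linarith
  have hd2 : γ * ‖D u‖ ≤ 2 * Γ * ‖F‖ := by
    have h1 := mul_le_mul_of_nonneg_left hd hγ.le
    have h2 := mul_le_mul_of_nonneg_left hx hΓ.le
    have h3 := mul_le_mul_of_nonneg_right hγΓ hf0
    linarith
  have hsx : (γ * ‖ι u‖) ^ 2 ≤ ‖F‖ ^ 2 := by gcongr
  have hsd : (γ * ‖D u‖) ^ 2 ≤ (2 * Γ * ‖F‖) ^ 2 := by gcongr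
  refine Real.sqrt_le_iff.mpr ⟨by positivity, ?_⟩
  have h2 : Real.sqrt 2 ^ 2 = 2 := Real.sq_sqrt (by norm_num)
  rw [mul_pow, div_pow, mul_pow (Real.sqrt 2), h2, div_mul_eq_mul_div, le_div_iff₀ (by positivity)]
  have h5 : 0 ≤ ‖F‖ ^ 2 * (1 + 2 * Γ ^ 4) := by positivity
  nlinarith
end

section
/- (Cauchy–Schwarz inequality for the gap form, the key estimate in the proof of Lemma 3.5.) For all x, y ∈ X one has Γ·(x, y)_X − a(x, y) ≤ (Γ − γ) ‖x‖_X ‖y‖_X. (This follows by applying the Cauchy–Schwarz inequality to the symmetric positive semi-definite bilinear form (x,y) ↦ Γ·(x, y)_X − a(x, y).) -/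
open scoped InnerProductSpace

/-- Cauchy–Schwarz inequality for the gap form (key estimate in the proof of
Lemma 3.5): `Γ·(x,y)_X − a(x,y) ≤ (Γ − γ) ‖x‖ ‖y‖` for all `x, y ∈ X`. -/
theorem gap_form_cauchy_schwarz
    {X : Type*} [NormedAddCommGroup X] [InnerProductSpace ℝ X]
    (γ Γ : ℝ) (hγ : 0 < γ) (hγΓ : γ ≤ Γ)
    (a : X →ₗ[ℝ] X →ₗ[ℝ] ℝ)
    (hasymm : ∀ x y : X, a x y = a y x)
    (haell : ∀ x : X, γ * ‖x‖ ^ 2 ≤ a x x)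
    (habdd : ∀ x y : X, |a x y| ≤ Γ * ‖x‖ * ‖y‖) :
    ∀ x y : X, Γ * ⟪x, y⟫_ℝ - a x y ≤ (Γ - γ) * ‖x‖ * ‖y‖ := by
  intro x y
  rcases eq_or_ne x 0 with rfl | hx
  · simp
  rcases eq_or_ne y 0 with rfl | hy
  · simp
  have hs : 0 < ‖x‖ := norm_pos_iff.mpr hx
  have ht : 0 < ‖y‖ := norm_pos_iff.mpr hy
  -- positivity of the gap form at `‖y‖ x - ‖x‖ y`
  have h1 := (le_abs_self _).trans (habdd (‖y‖ • x - ‖x‖ • y) (‖y‖ • x - ‖x‖ • y))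
  have h2 : ‖‖y‖ • x - ‖x‖ • y‖ * ‖‖y‖ • x - ‖x‖ • y‖
      = 2 * ‖x‖ ^ 2 * ‖y‖ ^ 2 - 2 * (‖x‖ * ‖y‖) * ⟪x, y⟫_ℝ := by
    rw [← real_inner_self_eq_norm_mul_norm]
    simp only [inner_sub_left, inner_sub_right, real_inner_smul_left, real_inner_smul_right,
      real_inner_self_eq_norm_sq, real_inner_comm x y, norm_smul, norm_norm]
    ring
  have h3 : a (‖y‖ • x - ‖x‖ • y) (‖y‖ • x - ‖x‖ • y)
      = ‖y‖ ^ 2 * a x x + ‖x‖ ^ 2 * a y y - 2 * (‖x‖ * ‖y‖) * a x y := by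
    simp only [map_sub, map_smul, LinearMap.sub_apply, LinearMap.smul_apply, smul_eq_mul,
      hasymm y x]
    ring
  rw [mul_assoc, h2, h3] at h1
  have h4 := mul_le_mul_of_nonneg_left (haell x) (sq_nonneg ‖y‖)
  have h5 := mul_le_mul_of_nonneg_left (haell y) (sq_nonneg ‖x‖)
  refine le_of_mul_le_mul_left ?_ (mul_pos hs ht)
  linarith
end
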